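/- Let G be a p-group of nilpotency class 2. Then the following are equivalent: (1) G is semi-extraspecial; (2) every χ ∈ Irr(G) whose kernel does not contain G' satisfies χ(1) = √(|G : G'|); (3) the number of irreducible characters of G whose kernel does not contain G' equals |G'| − 1. -/

import Mathlib

open CategoryTheory

noncomputable def repKer {G : Type} [Group G] (V : FDRep ℂ G) : Subgroup G :=
  (Representation.asGroupHom V.ρ).ker

/-- A nonabelian `p`-group is special if `G' = Z(G) = Φ(G)`. -/
def IsSpecial (G : Type*) [Group G] : Prop :=
  (¬ ∀ a b : G, a * b = b * a) ∧ commutator G = Subgroup.center G ∧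
    commutator G = frattini G

/-- An extraspecial `p`-group: special with `|G'| = p`. -/
def IsExtraspecial (p : ℕ) (G : Type*) [Group G] : Prop :=
  IsPGroup p G ∧ IsSpecial G ∧ Nat.card (commutator G) = p

/-- A semi-extraspecial `p`-group: special, and `G/M` is extraspecial for every
maximal subgroup `M` of `G'`. -/
def IsSemiExtraspecial (p : ℕ) (G : Type*) [Group G] : Prop :=
  IsPGroup p G ∧ IsSpecial G ∧
    ∀ (M : Subgroup G) (hM : M.Normal), M ≤ commutator G →
      IsCoatom (M.subgroupOf (commutator G)) →
        haveI := hM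
        IsExtraspecial p (G ⧸ M)

theorem repKer_mem {G : Type} [Group G] (V : FDRep ℂ G) (g : G) :
    g ∈ repKer V ↔ V.ρ g = 1 := by
  unfold repKer
  rw [MonoidHom.mem_ker, Units.ext_iff, Representation.asGroupHom_apply, Units.val_one]

theorem schur_scalar {G : Type} [Group G] [Finite G] (V : FDRep ℂ G) (hV : Simple V)
    (T : V →ₗ[ℂ] V) (hT : ∀ g, T ∘ₗ V.ρ g = V.ρ g ∘ₗ T) : ∃ c : ℂ, T = c • LinearMap.id := by
  have h1 := (FDRep.simple_iff_end_is_rank_one V).1 hV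
  let f : V ⟶ V := FDRep.forget₂HomLinearEquiv V V (Rep.ofHom ⟨T, fun g => hT g⟩)
  have hid : (𝟙 V : V ⟶ V) ≠ 0 := id_nonzero V
  obtain ⟨c, hc⟩ := (finrank_eq_one_iff_of_nonzero' _ hid).1 h1 f
  refine ⟨c, ?_⟩
  have h2 := congrArg (fun h : V ⟶ V => h.hom.hom.hom) hc
  exact h2.symm

theorem simple_of_irred {G : Type} [Group G] [Finite G] {V : Type} [AddCommGroup V] [Module ℂ V]
    [FiniteDimensional ℂ V] (ρ : Representation ℂ G V) [ρ.IsIrreducible] :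
    Simple (FDRep.of ρ) := by
  haveI := Fintype.ofFinite G
  have hne : (Nat.card G : ℂ) ≠ 0 := Nat.cast_ne_zero.2 Nat.card_pos.ne'
  letI := invertibleOfNonzero hne
  rw [FDRep.simple_iff_char_is_norm_one]
  have h := Representation.char_orthonormal ρ ρ
  rw [if_pos ⟨Representation.Equiv.refl ρ⟩] at h
  have h3 : ∑ g : G, ρ.character g * ρ.character g⁻¹ = Nat.card G := by
    field_simp at h
    simpa using h
  exact h3

theorem decomp {G : Type} [Group G] [Finite G] : ∀ (n : ℕ) {V : Type} [AddCommGroup V]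
    [Module ℂ V] [FiniteDimensional ℂ V] (ρ : Representation ℂ G V), Module.finrank ℂ V = n →
    ∃ l : List (G → ℂ), (∀ f ∈ l, ∃ W : FDRep ℂ G, Simple W ∧ W.character = f) ∧
      ρ.character = l.sum := by
  intro n
  induction n using Nat.strong_induction_on with
  | _ n ih =>
    intro V _ _ _ ρ hn
    by_cases hirr : ρ.IsIrreducible
    · refine ⟨[ρ.character], ?_, by simp⟩
      intro f hf
      rw [List.mem_singleton] at hf
      exact ⟨FDRep.of ρ, simple_of_irred ρ, hf.symm⟩
    · rcases Nat.eq_zero_or_pos n with h0 | hpos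
      · refine ⟨[], by simp, ?_⟩
        have : Subsingleton V := Module.finrank_zero_iff.1 (hn.trans h0)
        funext g
        have : ρ g = 0 := Subsingleton.elim _ _
        simp [Representation.character, this]
      · have hnt : Nontrivial V := Module.nontrivial_of_finrank_pos (R := ℂ) (hn ▸ hpos)
        have hbt : (⊥ : Subrepresentation ρ) ≠ ⊤ := by
          intro h
          have := congrArg Subrepresentation.toSubmodule h
          exact bot_ne_top (α := Submodule ℂ V) this
        have hnt' : Nontrivial (Subrepresentation ρ) := ⟨⟨_, _, hbt⟩⟩
        have : ∃ N : Subrepresentation ρ, N ≠ ⊥ ∧ N ≠ ⊤ := by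
          by_contra! hcon
          exact hirr ⟨fun N => or_iff_not_imp_left.2 (hcon N)⟩
        obtain ⟨N, hNb, hNt⟩ := this
        have hss : Representation.IsSemisimpleRepresentation ρ := inferInstance
        obtain ⟨N', hc⟩ := exists_isCompl N
        have hc' : IsCompl N.toSubmodule N'.toSubmodule := by
          constructor
          · rw [disjoint_iff]
            exact congrArg Subrepresentation.toSubmodule hc.inf_eq_bot
          · rw [codisjoint_iff]
            exact congrArg Subrepresentation.toSubmodule hc.sup_eq_top
        have hadd := Submodule.finrank_add_eq_of_isCompl hc'
        have hlt : Module.finrank ℂ N.toSubmodule < n := by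
          rw [← hn]
          apply Submodule.finrank_lt
          intro h
          exact hNt (Subrepresentation.toSubmodule_injective h)
        have hpos1 : 0 < Module.finrank ℂ N.toSubmodule := by
          rw [Nat.pos_iff_ne_zero]
          intro h
          exact hNb (Subrepresentation.toSubmodule_injective (Submodule.finrank_eq_zero.1 h))
        obtain ⟨l1, hl1, hs1⟩ := ih _ hlt N.toRepresentation rfl
        obtain ⟨l2, hl2, hs2⟩ := ih (Module.finrank ℂ N'.toSubmodule) (by omega)
          N'.toRepresentation rfl
        refine ⟨l1 ++ l2, ?_, ?_⟩
        · intro f hf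
          rcases List.mem_append.1 hf with h | h
          · exact hl1 f h
          · exact hl2 f h
        · rw [List.sum_append, ← hs1, ← hs2]
          funext g
          let e := Submodule.prodEquivOfIsCompl _ _ hc'
          have he : ρ g = e.conj ((N.toRepresentation g).prodMap (N'.toRepresentation g)) := by
            apply LinearMap.ext
            intro v
            obtain ⟨⟨a, b⟩, rfl⟩ := e.surjective v
            simp [e, LinearEquiv.conj_apply, Submodule.coe_prodEquivOfIsCompl,
              Subrepresentation.toRepresentation]
          simp only [Representation.character, Pi.add_apply]
          rw [he, LinearMap.trace_conj', LinearMap.trace_prodMap']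

theorem reg_char {G : Type} [Group G] [Finite G] : ∃ ρ : Representation ℂ G (G → ℂ),
    ∀ g, ρ.character g = by classical exact if g = 1 then (Nat.card G : ℂ) else 0 := by
  classical
  haveI := Fintype.ofFinite G
  let ρ : Representation ℂ G (G → ℂ) :=
    { toFun := fun s =>
        { toFun := fun f t => f (s⁻¹ * t), map_add' := fun _ _ => rfl, map_smul' := fun _ _ => rfl }
      map_one' := by ext; simp
      map_mul' := fun a b => by
        apply LinearMap.ext; intro f; funext t; simp [mul_assoc] }
  refine ⟨ρ, fun g => ?_⟩
  rw [Representation.character, LinearMap.trace_eq_matrix_trace ℂ (Pi.basisFun ℂ G), Matrix.trace]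
  simp only [Matrix.diag_apply, LinearMap.toMatrix_apply, Pi.basisFun_apply, Pi.basisFun_repr]
  have : ∀ t : G, (ρ g (Pi.single t 1)) t = if g = 1 then (1 : ℂ) else 0 := by
    intro t
    change (Pi.single t (1 : ℂ) : G → ℂ) (g⁻¹ * t) = _
    rw [Pi.single_apply]
    simp
  simp only [this]
  split_ifs <;> simp

theorem char_orth {G : Type} [Group G] [Fintype G] (V W : FDRep ℂ G) (hV : Simple V)
    (hW : Simple W) : ∑ g : G, V.character g * W.character g⁻¹ =
      by classical exact if V.character = W.character then (Nat.card G : ℂ) else 0 := by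
  classical
  have hne : (Nat.card G : ℂ) ≠ 0 := Nat.cast_ne_zero.2 Nat.card_pos.ne'
  letI := invertibleOfNonzero hne
  split_ifs with h
  · rw [← h]; exact (FDRep.simple_iff_char_is_norm_one V).1 hV
  · have h1 := FDRep.char_orthonormal V W
    rw [if_neg] at h1
    · simpa [hne] using h1
    · rintro ⟨i⟩
      exact h (FDRep.char_iso i)

theorem finrank_pos_of_simple {G : Type} [Group G] [Finite G] (V : FDRep ℂ G) (hV : Simple V) :
    0 < Module.finrank ℂ V := by
  haveI := Fintype.ofFinite G
  rw [Nat.pos_iff_ne_zero]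
  intro h
  have h1 := (FDRep.simple_iff_char_is_norm_one V).1 hV
  have : Subsingleton V := Module.finrank_zero_iff.1 h
  have h2 : ∀ g, V.character g = 0 := by
    intro g
    have : V.ρ g = 0 := Subsingleton.elim _ _
    simp [FDRep.character, this]
  simp only [h2] at h1
  have hne : (Nat.card G : ℂ) ≠ 0 := Nat.cast_ne_zero.2 Nat.card_pos.ne'
  apply hne
  simpa using h1.symm

theorem irr_finset (G : Type) [Group G] [Finite G] : ∃ s : Finset (G → ℂ),
    (∀ f, f ∈ s ↔ ∃ V : FDRep ℂ G, Simple V ∧ V.character = f) ∧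
    ∀ g, ∑ f ∈ s, f 1 * f g = by classical exact if g = 1 then (Nat.card G : ℂ) else 0 := by
  classical
  haveI := Fintype.ofFinite G
  have hne : (Nat.card G : ℂ) ≠ 0 := Nat.cast_ne_zero.2 Nat.card_pos.ne'
  obtain ⟨ρ, hρ⟩ := reg_char (G := G)
  obtain ⟨l, hl, hs⟩ := decomp _ ρ rfl
  have key : ∀ V : FDRep ℂ G, Simple V → (l.count V.character : ℂ) = V.character 1 := by
    intro V hV
    have h1 : ∑ g : G, ρ.character g * V.character g⁻¹ = Nat.card G * V.character 1 := by
      rw [Finset.sum_eq_single 1]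
      · rw [hρ]; simp
      · intro b _ hb; rw [hρ]; simp [hb]
      · simp
    have h2 : ∀ l : List (G → ℂ), (∀ f ∈ l, ∃ W : FDRep ℂ G, Simple W ∧ W.character = f) →
        ∑ g : G, l.sum g * V.character g⁻¹ = Nat.card G * l.count V.character := by
      intro l
      induction l with
      | nil => simp
      | cons a l ih =>
        intro h
        obtain ⟨W, hW, rfl⟩ := h a (by simp)
        have := ih (fun f hf => h f (List.mem_cons_of_mem _ hf))
        simp only [List.sum_cons, Pi.add_apply, add_mul, Finset.sum_add_distrib, this,
          char_orth W V hW hV, List.count_cons]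
        by_cases hWV : W.character = V.character
        · simp [hWV]; ring
        · simp [hWV]
    rw [hs, h2 l hl] at h1
    exact mul_left_cancel₀ hne h1
  refine ⟨l.toFinset, ?_, ?_⟩
  · intro f
    rw [List.mem_toFinset]
    refine ⟨hl f, ?_⟩
    rintro ⟨V, hV, rfl⟩
    rw [← List.count_pos_iff, ← Nat.cast_pos (α := ℝ)]
    have h1 := key V hV
    rw [FDRep.char_one] at h1
    have := finrank_pos_of_simple V hV
    rw [Nat.cast_inj] at h1
    rw [h1]
    exact_mod_cast this
  · intro g
    rw [← hρ, hs, Finset.sum_list_count, Finset.sum_apply]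
    refine Finset.sum_congr rfl ?_
    intro f hf
    obtain ⟨V, hV, rfl⟩ := hl f (List.mem_toFinset.1 hf)
    rw [← key V hV]
    simp
open scoped commutatorElement


theorem repKer_normal {G : Type} [Group G] (V : FDRep ℂ G) : (repKer V).Normal := by
  unfold repKer
  infer_instance

/-- The subgroup of elements that are central modulo a normal subgroup `N`. -/
def centerMod {G : Type} [Group G] (N : Subgroup G) [N.Normal] : Subgroup G :=
  (Subgroup.center (G ⧸ N)).comap (QuotientGroup.mk' N)

theorem mk_mem_center_iff {G : Type} [Group G] (N : Subgroup G) [N.Normal] (g : G) :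
    (QuotientGroup.mk g : G ⧸ N) ∈ Subgroup.center (G ⧸ N) ↔ ∀ x : G, ⁅x, g⁆ ∈ N := by
  rw [Subgroup.mem_center_iff]
  constructor
  · intro h x
    have h1 := h (QuotientGroup.mk x)
    rw [← QuotientGroup.eq_one_iff]
    rw [commutatorElement_def]
    simp only [QuotientGroup.mk_mul, QuotientGroup.mk_inv]
    rw [h1]; group
  · intro h y
    obtain ⟨x, rfl⟩ := QuotientGroup.mk_surjective y
    have h1 := h x
    rw [← QuotientGroup.eq_one_iff, commutatorElement_def] at h1
    simp only [QuotientGroup.mk_mul, QuotientGroup.mk_inv] at h1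
    rw [mul_inv_eq_one, mul_inv_eq_iff_eq_mul] at h1
    exact h1

theorem mem_centerMod {G : Type} [Group G] (N : Subgroup G) [N.Normal] (g : G) :
    g ∈ centerMod N ↔ ∀ x : G, ⁅x, g⁆ ∈ N := mk_mem_center_iff N g

theorem scalar_of_centerMod {G : Type} [Group G] [Finite G] (V : FDRep ℂ G) (hV : Simple V)
    (g : G) (hg : ∀ x : G, ⁅x, g⁆ ∈ repKer V) : ∃ c : ℂ, V.ρ g = c • LinearMap.id := by
  apply schur_scalar V hV
  intro x
  have h1 := (repKer_mem V _).1 (hg x)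
  have h2 : x * g = ⁅x, g⁆ * (g * x) := by rw [commutatorElement_def]; group
  have h3 := congrArg V.ρ h2
  rw [map_mul, map_mul, h1, one_mul, map_mul] at h3
  exact h3.symm

theorem scalar_central {G : Type} [Group G] [Finite G] (V : FDRep ℂ G) (hV : Simple V)
    (g : G) (hg : g ∈ Subgroup.center G) : ∃ c : ℂ, V.ρ g = c • LinearMap.id := by
  apply scalar_of_centerMod V hV
  intro x
  have : ⁅x, g⁆ = 1 := commutatorElement_eq_one_iff_mul_comm.2 (Subgroup.mem_center_iff.1 hg x)
  rw [this]
  exact one_mem _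

theorem char_scalar_mul {G : Type} [Group G] (V : FDRep ℂ G) (z g : G) (c : ℂ)
    (h : V.ρ z = c • LinearMap.id) : V.character (z * g) = c * V.character g := by
  unfold FDRep.character
  rw [map_mul, h]
  have : (c • (LinearMap.id : V →ₗ[ℂ] V)) * V.ρ g = c • V.ρ g := by
    ext v; simp
  rw [this, map_smul, smul_eq_mul]

theorem char_scalar {G : Type} [Group G] (V : FDRep ℂ G) (z : G) (c : ℂ)
    (h : V.ρ z = c • LinearMap.id) : V.character z = c * V.character 1 := by
  have := char_scalar_mul V z 1 c h
  rwa [mul_one] at this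

theorem scalar_eq_one {G : Type} [Group G] (V : FDRep ℂ G) (z : G) (c : ℂ)
    (h : V.ρ z = c • LinearMap.id) (hc : c = 1) : z ∈ repKer V := by
  rw [repKer_mem, h, hc, one_smul]; rfl

theorem char_one_ne {G : Type} [Group G] [Finite G] (V : FDRep ℂ G) (hV : Simple V) :
    V.character 1 ≠ 0 := by
  rw [FDRep.char_one]
  exact Nat.cast_ne_zero.2 (finrank_pos_of_simple V hV).ne'

theorem degree_sq {G : Type} [Group G] [Finite G] (hclass : commutator G ≤ Subgroup.center G)
    (V : FDRep ℂ G) (hV : Simple V) [(repKer V).Normal] :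
    Module.finrank ℂ V ^ 2 = (centerMod (repKer V)).index := by
  classical
  have := Fintype.ofFinite G
  have h1 := (FDRep.simple_iff_char_is_norm_one V).1 hV
  have hd := char_one_ne V hV
  have h2 : ∀ g : G, V.character g * V.character g⁻¹ =
      if g ∈ centerMod (repKer V) then V.character 1 ^ 2 else 0 := by
    intro g
    split_ifs with hg
    · rw [mem_centerMod] at hg
      obtain ⟨c, hc⟩ := scalar_of_centerMod V hV g hg
      have h3 := char_scalar_mul V g g⁻¹ c hc
      rw [mul_inv_cancel] at h3
      rw [char_scalar V g c hc, h3]; rw [h3] at *; ring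
    · rw [mem_centerMod] at hg
      push Not at hg
      obtain ⟨x, hx⟩ := hg
      have hz : ⁅x, g⁆ ∈ Subgroup.center G :=
        hclass (Subgroup.commutator_mem_commutator (Subgroup.mem_top _) (Subgroup.mem_top _))
      obtain ⟨c, hc⟩ := scalar_central V hV _ hz
      have hc1 : c ≠ 1 := fun h => hx (scalar_eq_one V _ c hc h)
      have h3 := char_scalar_mul V _ g c hc
      have h4 : ⁅x, g⁆ * g = x * g * x⁻¹ := by rw [commutatorElement_def]; group
      rw [h4, FDRep.char_conj] at h3
      have h5 : (c - 1) * V.character g = 0 := by linear_combination -h3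
      rcases mul_eq_zero.1 h5 with h | h
      · exact absurd (sub_eq_zero.1 h) hc1
      · rw [h, zero_mul]
  simp only [h2] at h1
  rw [← Finset.sum_filter, Finset.sum_const, nsmul_eq_mul, FDRep.char_one] at h1
  have h6 : (Finset.univ.filter (fun g => g ∈ centerMod (repKer V))).card =
      Nat.card (centerMod (repKer V)) := by
    rw [Nat.card_eq_fintype_card, Fintype.card_subtype]
  rw [h6] at h1
  have h7 : Nat.card (centerMod (repKer V)) * Module.finrank ℂ V ^ 2 = Nat.card G := by
    exact_mod_cast h1
  rw [← Subgroup.card_mul_index (centerMod (repKer V))] at h7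
  exact Nat.eq_of_mul_eq_mul_left Nat.card_pos h7

theorem le_centerMod {G : Type} [Group G] (hclass : commutator G ≤ Subgroup.center G)
    (N : Subgroup G) [N.Normal] : commutator G ≤ centerMod N := by
  intro g hg
  rw [mem_centerMod]
  intro x
  have : ⁅x, g⁆ = 1 :=
    commutatorElement_eq_one_iff_mul_comm.2 (Subgroup.mem_center_iff.1 (hclass hg) x)
  rw [this]
  exact one_mem _

theorem le_repKer_iff {G : Type} [Group G] [Finite G] (V : FDRep ℂ G) (hV : Simple V)
    (K : Subgroup G) (hK : K ≤ Subgroup.center G) :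
    K ≤ repKer V ↔ ∀ k ∈ K, V.character k = V.character 1 := by
  constructor
  · intro h k hk
    have := (repKer_mem V k).1 (h hk)
    unfold FDRep.character
    rw [this, map_one V.ρ]
  · intro h k hk
    obtain ⟨c, hc⟩ := scalar_central V hV k (hK hk)
    apply scalar_eq_one V k c hc
    have h1 := char_scalar V k c hc
    rw [h k hk] at h1
    have := char_one_ne V hV
    exact mul_right_cancel₀ this (by rw [one_mul]; exact h1.symm)

theorem sum_char_K {G : Type} [Group G] [Finite G] (V : FDRep ℂ G) (hV : Simple V)
    (K : Subgroup G) [Fintype K] (hK : K ≤ Subgroup.center G) (hn : ¬ K ≤ repKer V) :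
    ∑ k : K, V.character k = 0 := by
  obtain ⟨z, hz, hzn⟩ := SetLike.not_le_iff_exists.1 hn
  obtain ⟨c, hc⟩ := scalar_central V hV z (hK hz)
  have hc1 : c ≠ 1 := fun h => hzn (scalar_eq_one V _ c hc h)
  have h1 : ∑ k : K, V.character k = c * ∑ k : K, V.character k := by
    rw [Finset.mul_sum]
    rw [← Equiv.sum_comp (Equiv.mulLeft (⟨z, hz⟩ : K))]
    refine Finset.sum_congr rfl fun k _ => ?_
    exact char_scalar_mul V z k c hc
  have h5 : (c - 1) * ∑ k : K, V.character k = 0 := by linear_combination -h1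
  rcases mul_eq_zero.1 h5 with h | h
  · exact absurd (sub_eq_zero.1 h) hc1
  · exact h

open Classical in
theorem sum_sq_K {G : Type} [Group G] [Finite G] (s : Finset (G → ℂ))
    (hs : ∀ f, f ∈ s ↔ ∃ V : FDRep ℂ G, Simple V ∧ V.character = f)
    (hsum : ∀ g, ∑ f ∈ s, f 1 * f g = if g = 1 then (Nat.card G : ℂ) else 0)
    (K : Subgroup G) (hK : K ≤ Subgroup.center G) :
    (Nat.card K : ℂ) * ∑ f ∈ s with ∀ k ∈ K, f k = f 1, f 1 ^ 2 = Nat.card G := by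
  have := Fintype.ofFinite K
  have h1 : ∑ k : K, ∑ f ∈ s, f 1 * f k = Nat.card G := by
    simp only [hsum]
    rw [Finset.sum_eq_single 1]
    · simp
    · intro b _ hb
      rw [if_neg]
      intro h
      exact hb (Subtype.ext h)
    · simp
  rw [Finset.sum_comm] at h1
  rw [← h1, Finset.mul_sum, Finset.sum_filter]
  refine Finset.sum_congr rfl fun f hf => ?_
  rw [← Finset.mul_sum]
  obtain ⟨V, hV, rfl⟩ := (hs f).1 hf
  split_ifs with h
  · have : ∑ k : K, V.character k = Nat.card K * V.character 1 := by
      rw [Finset.sum_congr rfl (fun k _ => h k.1 k.2), Finset.sum_const, nsmul_eq_mul]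
      simp
    rw [this]; ring
  · rw [sum_char_K V hV K hK, mul_zero]
    rwa [le_repKer_iff V hV K hK]

theorem exists_simple {G : Type} [Group G] [Finite G] (hclass : commutator G ≤ Subgroup.center G)
    (M : Subgroup G) (hM : M ≤ commutator G) (hn : ¬ commutator G ≤ M) :
    ∃ V : FDRep ℂ G, Simple V ∧ M ≤ repKer V ∧ ¬ commutator G ≤ repKer V := by
  classical
  by_contra! hcon
  obtain ⟨s, hs, hsum⟩ := irr_finset G
  have h1 := sum_sq_K s hs hsum M (hM.trans hclass)
  have h2 := sum_sq_K s hs hsum (commutator G) hclass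
  have h3 : s.filter (fun f => ∀ k ∈ M, f k = f 1) =
      s.filter (fun f => ∀ k ∈ commutator G, f k = f 1) := by
    apply Finset.filter_congr
    intro f hf
    obtain ⟨V, hV, rfl⟩ := (hs f).1 hf
    rw [← le_repKer_iff V hV M (hM.trans hclass), ← le_repKer_iff V hV _ hclass]
    exact ⟨hcon V hV, fun h => hM.trans h⟩
  rw [h3, ← h2] at h1
  have hne : (Nat.card G : ℂ) ≠ 0 := Nat.cast_ne_zero.2 Nat.card_pos.ne'
  have h4 := mul_right_cancel₀ (fun h => hne (by rw [← h2, h, mul_zero])) h1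
  have h5 : Nat.card M = Nat.card (commutator G) := by exact_mod_cast h4
  exact hn (Subgroup.eq_of_le_of_card_ge hM h5.ge).ge

theorem commutator_le_frattini {G : Type} [Group G] (hclass : commutator G ≤ Subgroup.center G) :
    commutator G ≤ frattini G := by
  unfold frattini Order.radical
  refine le_iInf₂ fun K hK => ?_
  by_contra hn
  have htop : K ⊔ commutator G = ⊤ := by
    apply hK.2
    exact lt_of_le_of_ne le_sup_left (fun h => hn (by rw [h]; exact le_sup_right))
  apply hn
  rw [commutator_def, Subgroup.commutator_le]
  intro a _ b _
  have ha : a ∈ K ⊔ commutator G := htop ▸ Subgroup.mem_top _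
  have hb : b ∈ K ⊔ commutator G := htop ▸ Subgroup.mem_top _
  obtain ⟨k, hk, z, hz, rfl⟩ := Subgroup.mem_sup_of_normal_right.1 ha
  obtain ⟨l, hl, w, hw, rfl⟩ := Subgroup.mem_sup_of_normal_right.1 hb
  have hz' := Subgroup.mem_center_iff.1 (hclass hz)
  have hw' := Subgroup.mem_center_iff.1 (hclass hw)
  have : ⁅k * z, l * w⁆ = ⁅k, l⁆ := by
    rw [commutatorElement_def, commutatorElement_def, mul_inv_rev, mul_inv_rev]
    calc k * z * (l * w) * (z⁻¹ * k⁻¹) * (w⁻¹ * l⁻¹)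
        = k * ((l * w) * z) * (z⁻¹ * k⁻¹) * (w⁻¹ * l⁻¹) := by rw [hz' (l * w)]; group
      _ = k * l * (k⁻¹ * w) * (w⁻¹ * l⁻¹) := by rw [hw' k⁻¹]; group
      _ = _ := by group
  rw [this, commutatorElement_def]
  exact K.mul_mem (K.mul_mem (K.mul_mem hk hl) (K.inv_mem hk)) (K.inv_mem hl)

theorem frattini_le_commutator {p : ℕ} (hp : p.Prime) {G : Type} [Group G] [Finite G]
    (hpow : ∀ x : G, x ^ p ∈ commutator G) : frattini G ≤ commutator G := by
  intro g hg
  by_contra hgn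
  obtain ⟨K, hK⟩ := Set.Finite.exists_maximal (Set.toFinite
    {K : Subgroup G | commutator G ≤ K ∧ g ∉ K}) ⟨commutator G, le_rfl, hgn⟩
  have hKc := hK.prop.1
  have hKn : K.Normal := Subgroup.Normal.of_commutator_le G hKc
  have hadj : ∀ x, x ∉ K → K ⊔ Subgroup.zpowers g = ⊤ → True := fun _ _ _ => trivial
  have key : ∀ x, x ∈ K ⊔ Subgroup.zpowers g := by
    intro x
    by_cases hx : x ∈ K
    · exact (le_sup_left : K ≤ _) hx
    have hgx : g ∈ K ⊔ Subgroup.zpowers x := by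
      by_contra hh
      have h1 := hK.le_of_ge (y := K ⊔ Subgroup.zpowers x) ⟨hKc.trans le_sup_left, hh⟩ le_sup_left
      exact hx (h1 ((le_sup_right : Subgroup.zpowers x ≤ _) (Subgroup.mem_zpowers x)))
    obtain ⟨k, hk, y, hy, hky⟩ := Subgroup.mem_sup_of_normal_left.1 hgx
    obtain ⟨i, rfl⟩ := Subgroup.mem_zpowers_iff.1 hy
    have hxp : x ^ p ∈ K := hKc (hpow x)
    have hip : ¬ (p : ℤ) ∣ i := by
      rintro ⟨j, rfl⟩
      apply hK.prop.2
      rw [← hky, zpow_mul, zpow_natCast]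
      exact K.mul_mem hk (K.zpow_mem hxp j)
    have hcop : IsCoprime i (p : ℤ) :=
      ((Nat.prime_iff_prime_int.1 hp).coprime_iff_not_dvd.2 hip).symm
    obtain ⟨a, b, hab⟩ := hcop
    have hxi : x ^ i ∈ K ⊔ Subgroup.zpowers g := by
      have : x ^ i = k⁻¹ * g := by rw [← hky]; group
      rw [this]
      exact mul_mem ((le_sup_left : K ≤ _) (inv_mem hk))
        ((le_sup_right : Subgroup.zpowers g ≤ _) (Subgroup.mem_zpowers g))
    have hxe : x = (x ^ i) ^ a * (x ^ p) ^ b := by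
      rw [← zpow_natCast x p, ← zpow_mul, ← zpow_mul, ← zpow_add, mul_comm i, mul_comm (p : ℤ),
        hab, zpow_one]
    rw [hxe]
    exact mul_mem (zpow_mem hxi a) (zpow_mem ((le_sup_left : K ≤ _) hxp) b)
  have hco : IsCoatom K := by
    refine ⟨fun h => hK.prop.2 (h ▸ Subgroup.mem_top g), fun L hL => ?_⟩
    have hgL : g ∈ L := by
      by_contra hh
      exact hL.not_ge (hK.le_of_ge (y := L) ⟨hKc.trans hL.le, hh⟩ hL.le)
    rw [eq_top_iff]
    intro x _
    exact (sup_le hL.le (by rwa [Subgroup.zpowers_le])) (key x)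
  exact hK.prop.2 (frattini_le_coatom hco hg)

theorem index_of_coatom {p : ℕ} (hp : p.Prime) {A : Type} [Group A] [Finite A]
    (hA : IsPGroup p A) (M : Subgroup A) (hM : IsCoatom M) : M.index = p := by
  have := Fact.mk hp
  obtain ⟨n, hn⟩ := IsPGroup.iff_card.1 (hA.to_subgroup M)
  obtain ⟨m, hm⟩ := IsPGroup.iff_card.1 hA
  have hlt : n < m := by
    have h1 : Nat.card M < Nat.card A := by
      refine lt_of_le_of_ne (Subgroup.card_le_card_group M) fun h => ?_
      exact hM.1 (Subgroup.eq_top_of_card_eq M h)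
    rw [hn, hm] at h1
    exact (Nat.pow_lt_pow_iff_right hp.one_lt).1 h1
  obtain ⟨K, hK, hMK⟩ := Sylow.exists_subgroup_card_pow_succ
    (p := p) (n := n) (by rw [hm]; exact pow_dvd_pow p hlt) hn
  have hKt : K = ⊤ := by
    apply hM.2
    refine lt_of_le_of_ne hMK fun h => ?_
    rw [h, hK] at hn
    exact absurd (Nat.pow_right_injective hp.two_le hn) (by simp)
  rw [hKt, Subgroup.card_top, ← Subgroup.card_mul_index M, hn, pow_succ] at hK
  exact Nat.eq_of_mul_eq_mul_left (pow_pos hp.pos n) hK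

theorem commutator_pow {G : Type} [Group G] (hclass : commutator G ≤ Subgroup.center G)
    (x y : G) (n : ℕ) : ⁅y, x ^ n⁆ = ⁅y, x⁆ ^ n := by
  have hz : ⁅y, x⁆ ∈ Subgroup.center G :=
    hclass (Subgroup.commutator_mem_commutator (Subgroup.mem_top _) (Subgroup.mem_top _))
  have h1 : y * x * y⁻¹ = ⁅y, x⁆ * x := by rw [commutatorElement_def]; group
  have h2 : (y * x * y⁻¹) ^ n = y * x ^ n * y⁻¹ := conj_pow
  have h3 : Commute ⁅y, x⁆ x := (Subgroup.mem_center_iff.1 hz x).symm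
  rw [h1, h3.mul_pow] at h2
  rw [commutatorElement_def y (x ^ n), ← h2]
  group

theorem commutator_quot {G : Type} [Group G] (M : Subgroup G) [M.Normal] :
    commutator (G ⧸ M) = (commutator G).map (QuotientGroup.mk' M) := by
  rw [commutator_def, commutator_def, Subgroup.map_commutator,
    Subgroup.map_top_of_surjective _ (QuotientGroup.mk'_surjective M)]

theorem not_le_of_coatom {G : Type} [Group G] (M C : Subgroup G)
    (h : IsCoatom (M.subgroupOf C)) : ¬ C ≤ M := fun hle =>
  h.1 (Subgroup.subgroupOf_eq_top.2 hle)

theorem exists_coatom_over {G : Type} [Group G] [Finite G] (L C : Subgroup G) (hn : ¬ C ≤ L) :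
    ∃ M : Subgroup G, M ≤ C ∧ L ⊓ C ≤ M ∧ IsCoatom (M.subgroupOf C) := by
  have h1 : L.subgroupOf C ≠ ⊤ := fun h => hn (Subgroup.subgroupOf_eq_top.1 h)
  obtain ⟨M', hM', hle⟩ := (eq_top_or_exists_le_coatom (L.subgroupOf C)).resolve_left h1
  refine ⟨M'.map C.subtype, Subgroup.map_subtype_le M', ?_, ?_⟩
  · rintro x ⟨hxL, hxC⟩
    exact ⟨⟨x, hxC⟩, hle (Subgroup.mem_subgroupOf.2 hxL), rfl⟩
  · have : (M'.map C.subtype).subgroupOf C = M' :=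
      Subgroup.comap_map_eq_self_of_injective C.subtype_injective M'
    rw [this]; exact hM'

theorem normal_of_le_center {G : Type} [Group G] (M : Subgroup G)
    (h : M ≤ Subgroup.center G) : M.Normal := by
  refine ⟨fun n hn g => ?_⟩
  rw [Subgroup.mem_center_iff.1 (h hn) g, mul_assoc, mul_inv_cancel, mul_one]
  exact hn

theorem one_imp_two {p : ℕ} {G : Type} [Group G] [Finite G]
    (hclass : commutator G ≤ Subgroup.center G) (h : IsSemiExtraspecial p G)
    (V : FDRep ℂ G) (hV : Simple V) (hn : ¬ commutator G ≤ repKer V) :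
    Module.finrank ℂ V ^ 2 = (commutator G).index := by
  have := repKer_normal V
  rw [degree_sq hclass V hV]
  congr 1
  apply le_antisymm _ (le_centerMod hclass _)
  obtain ⟨M, hMC, hLM, hco⟩ := exists_coatom_over _ _ hn
  have hMn : M.Normal := normal_of_le_center M (hMC.trans hclass)
  obtain ⟨-, ⟨-, hc, -⟩, -⟩ := h.2.2 M hMn hMC hco
  intro g hg
  rw [mem_centerMod] at hg
  have h1 : (QuotientGroup.mk g : G ⧸ M) ∈ Subgroup.center (G ⧸ M) := by
    rw [mk_mem_center_iff]
    intro x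
    exact hLM ⟨hg x, Subgroup.commutator_mem_commutator (Subgroup.mem_top _) (Subgroup.mem_top _)⟩
  rw [← hc, commutator_quot] at h1
  obtain ⟨c, hcc, hce⟩ := h1
  have h2 : c⁻¹ * g ∈ M := QuotientGroup.eq.1 hce
  have h3 : g = c * (c⁻¹ * g) := by group
  rw [h3]
  exact mul_mem hcc (hMC h2)

theorem two_imp_one {p : ℕ} (hp : p.Prime) {G : Type} [Group G] [Finite G]
    (hpG : IsPGroup p G) (hclass : commutator G ≤ Subgroup.center G)
    (hnonab : commutator G ≠ ⊥)
    (h : ∀ V : FDRep ℂ G, Simple V → ¬ commutator G ≤ repKer V →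
          Module.finrank ℂ V ^ 2 = (commutator G).index) : IsSemiExtraspecial p G := by
  have claim : ∀ M : Subgroup G, M ≤ commutator G → ¬ commutator G ≤ M →
      ∀ g, (∀ x : G, ⁅x, g⁆ ∈ M) → g ∈ commutator G := by
    intro M hM hn g hg
    obtain ⟨V, hV, hMV, hVn⟩ := exists_simple hclass M hM hn
    have := repKer_normal V
    have h1 := h V hV hVn
    rw [degree_sq hclass V hV] at h1
    have h2 := le_centerMod hclass (repKer V)
    have h3 := Subgroup.card_mul_index (commutator G)
    rw [← Subgroup.card_mul_index (centerMod (repKer V)), h1] at h3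
    have h4 := Nat.eq_of_mul_eq_mul_right
      (Nat.pos_of_ne_zero Subgroup.index_ne_zero_of_finite) h3
    rw [Subgroup.eq_of_le_of_card_ge h2 h4.ge, mem_centerMod]
    exact fun x => hMV (hg x)
  have hcen : commutator G = Subgroup.center G := by
    apply le_antisymm hclass
    intro g hg
    apply claim ⊥ bot_le (fun hh => hnonab (le_bot_iff.1 hh))
    intro x
    rw [Subgroup.mem_bot]
    exact commutatorElement_eq_one_iff_mul_comm.2 (Subgroup.mem_center_iff.1 hg x)
  have hpC : IsPGroup p (commutator G) := hpG.to_subgroup _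
  have hpow : ∀ x : G, x ^ p ∈ commutator G := by
    intro x
    obtain ⟨M, hMC, -, hco⟩ := exists_coatom_over ⊥ (commutator G)
      (fun hh => hnonab (le_bot_iff.1 hh))
    apply claim M hMC (not_le_of_coatom _ _ hco)
    intro y
    rw [commutator_pow hclass]
    have hMn : M.Normal := normal_of_le_center M (hMC.trans hclass)
    have hidx := index_of_coatom hp hpC _ hco
    have hm := Subgroup.pow_index_mem (M.subgroupOf (commutator G)) (⟨⁅y, x⁆,
      Subgroup.commutator_mem_commutator (Subgroup.mem_top _) (Subgroup.mem_top _)⟩ :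
        commutator G)
    rw [hidx] at hm
    exact Subgroup.mem_subgroupOf.1 hm
  refine ⟨hpG, ⟨?_, hcen, ?_⟩, ?_⟩
  · intro hab
    apply hnonab
    rw [eq_bot_iff, commutator_def, Subgroup.commutator_le]
    intro a _ b _
    exact Subgroup.mem_bot.2 (commutatorElement_eq_one_iff_mul_comm.2 (hab a b))
  · exact le_antisymm (commutator_le_frattini hclass) (frattini_le_commutator hp hpow)
  · intro M hMn hMC hco
    have hnle := not_le_of_coatom _ _ hco
    have hqc : commutator (G ⧸ M) = Subgroup.center (G ⧸ M) := by
      apply le_antisymm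
      · rw [commutator_quot]
        rintro _ ⟨c, hc, rfl⟩
        exact le_centerMod hclass M hc
      · intro q hq
        obtain ⟨g, rfl⟩ := QuotientGroup.mk_surjective q
        rw [mk_mem_center_iff] at hq
        rw [commutator_quot]
        exact ⟨g, claim M hMC hnle g hq, rfl⟩
    refine ⟨hpG.to_quotient M, ⟨?_, hqc, ?_⟩, ?_⟩
    · intro hab
      apply hnle
      rw [commutator_def, Subgroup.commutator_le]
      intro a _ b _
      rw [← QuotientGroup.eq_one_iff]
      exact commutatorElement_eq_one_iff_mul_comm.2
        (hab (QuotientGroup.mk a) (QuotientGroup.mk b))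
    · refine le_antisymm (commutator_le_frattini hqc.le) (frattini_le_commutator hp ?_)
      intro q
      obtain ⟨g, rfl⟩ := QuotientGroup.mk_surjective q
      rw [commutator_quot]
      exact ⟨g ^ p, hpow g, rfl⟩
    · rw [commutator_quot, ← Subgroup.relIndex_ker, QuotientGroup.ker_mk']
      exact index_of_coatom hp hpC _ hco

theorem two_iff_three {G : Type} [Group G] [Finite G]
    (hclass : commutator G ≤ Subgroup.center G) :
    (∀ V : FDRep ℂ G, Simple V → ¬ commutator G ≤ repKer V →
          Module.finrank ℂ V ^ 2 = (commutator G).index) ↔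
        {f : G → ℂ | ∃ V : FDRep ℂ G, Simple V ∧ ¬ commutator G ≤ repKer V ∧
            V.character = f}.ncard = Nat.card (commutator G) - 1 := by
  classical
  obtain ⟨s, hs, hsum⟩ := irr_finset G
  have hset : {f : G → ℂ | ∃ V : FDRep ℂ G, Simple V ∧ ¬ commutator G ≤ repKer V ∧
      V.character = f} = (s.filter (fun f => ¬ ∀ k ∈ commutator G, f k = f 1) : Finset _) := by
    ext f
    simp only [Set.mem_ofPred_eq, Finset.coe_filter]
    constructor
    · rintro ⟨V, hV, hn, rfl⟩
      exact ⟨(hs _).2 ⟨V, hV, rfl⟩, by rwa [← le_repKer_iff V hV _ hclass]⟩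
    · rintro ⟨hf, hn⟩
      obtain ⟨V, hV, rfl⟩ := (hs f).1 hf
      exact ⟨V, hV, by rwa [le_repKer_iff V hV _ hclass], rfl⟩
  rw [hset, Set.ncard_coe_finset]
  set t := s.filter (fun f => ¬ ∀ k ∈ commutator G, f k = f 1) with ht
  have htmem : ∀ f ∈ t, ∃ V : FDRep ℂ G, Simple V ∧ ¬ commutator G ≤ repKer V ∧
      V.character = f := by
    intro f hf
    have : f ∈ (t : Set (G → ℂ)) := hf
    rw [← hset] at this
    exact this
  have hmemt : ∀ V : FDRep ℂ G, Simple V → ¬ commutator G ≤ repKer V → V.character ∈ t := by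
    intro V hV hn
    have : V.character ∈ (t : Set (G → ℂ)) := by
      rw [← hset]; exact ⟨V, hV, hn, rfl⟩
    exact this
  set m := Nat.card (commutator G) with hm
  set k := (commutator G).index with hk
  have hmk : m * k = Nat.card G := Subgroup.card_mul_index _
  have hmpos : 0 < m := Nat.card_pos
  have hkpos : 0 < k := Nat.pos_of_ne_zero Subgroup.index_ne_zero_of_finite
  have h1 := sum_sq_K s hs hsum (commutator G) hclass
  have h2 := hsum 1
  rw [if_pos rfl] at h2
  rw [← Finset.sum_filter_add_sum_filter_not s (fun f => ∀ k ∈ commutator G, f k = f 1)] at h2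
  rw [← hmk, Nat.cast_mul] at h1 h2
  have hm0 : (m : ℂ) ≠ 0 := Nat.cast_ne_zero.2 hmpos.ne'
  have h3 := mul_left_cancel₀ hm0 h1
  have h4 : ∑ f ∈ t, f 1 ^ 2 = ((m - 1 : ℕ) : ℂ) * k := by
    rw [Nat.cast_sub hmpos, Nat.cast_one]
    simp only [← pow_two] at h2
    rw [h3] at h2
    linear_combination h2
  -- natural-number valued squared degrees
  have hd : ∀ f ∈ t, ∃ d : ℕ, f 1 ^ 2 = d ∧ d ≤ k := by
    intro f hf
    obtain ⟨V, hV, hn, rfl⟩ := htmem f hf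
    have := repKer_normal V
    refine ⟨Module.finrank ℂ V ^ 2, by rw [FDRep.char_one]; push_cast; rfl, ?_⟩
    rw [degree_sq hclass V hV]
    exact Nat.le_of_dvd hkpos (Subgroup.index_dvd_of_le (le_centerMod hclass _))
  choose! d hd1 hd2 using hd
  have h5 : ∑ f ∈ t, d f = (m - 1) * k := by
    have : ((∑ f ∈ t, d f : ℕ) : ℂ) = (((m - 1) * k : ℕ) : ℂ) := by
      rw [Nat.cast_sum, ← Finset.sum_congr rfl hd1, h4, Nat.cast_mul]
    exact_mod_cast this
  have hdV : ∀ V : FDRep ℂ G, Simple V → ¬ commutator G ≤ repKer V →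
      d V.character = Module.finrank ℂ V ^ 2 := by
    intro V hV hn
    have := hd1 _ (hmemt V hV hn)
    rw [FDRep.char_one] at this
    exact_mod_cast this.symm
  constructor
  · intro h
    have h6 : ∑ f ∈ t, d f = t.card * k := by
      rw [Finset.sum_const_nat]
      intro f hf
      obtain ⟨V, hV, hn, rfl⟩ := htmem f hf
      rw [hdV V hV hn, h V hV hn]
    exact Nat.eq_of_mul_eq_mul_right hkpos (h6.symm.trans h5)
  · intro h V hV hn
    have h6 : ∑ f ∈ t, d f = ∑ f ∈ t, k := by
      rw [h5, Finset.sum_const, smul_eq_mul, h]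
    have h7 := (Finset.sum_eq_sum_iff_of_le hd2).1 h6 _ (hmemt V hV hn)
    rw [← hdV V hV hn, h7]

/-- For a finite `p`-group `G` of nilpotency class 2, the following are
equivalent: (1) `G` is semi-extraspecial; (2) `χ(1) = √|G : G'|` for every
`χ ∈ Irr(G | G')`; (3) `|Irr(G | G')| = |G'| - 1`. -/
theorem stmt6 {p : ℕ} (hp : p.Prime) {G : Type} [Group G] [Finite G]
    (hpG : IsPGroup p G) (hclass : commutator G ≤ Subgroup.center G)
    (hnonab : commutator G ≠ ⊥) :
    (IsSemiExtraspecial p G ↔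
        ∀ V : FDRep ℂ G, Simple V → ¬ commutator G ≤ repKer V →
          Module.finrank ℂ V ^ 2 = (commutator G).index) ∧
      ((∀ V : FDRep ℂ G, Simple V → ¬ commutator G ≤ repKer V →
          Module.finrank ℂ V ^ 2 = (commutator G).index) ↔
        {f : G → ℂ | ∃ V : FDRep ℂ G, Simple V ∧ ¬ commutator G ≤ repKer V ∧
            V.character = f}.ncard = Nat.card (commutator G) - 1) := by
  exact ⟨⟨fun h V hV hn => one_imp_two hclass h V hV hn,
    fun h => two_imp_one hp hpG hclass hnonab h⟩, two_iff_three hclass⟩
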